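/- Let n ≥ 1, m > n, let r, p : ℝ^n → [1,∞) be measurable exponents, and let ν be a constant with 1 ≤ ν ≤ r⁻. Define ω(τ) = (1/p⁻)(1 − ν/r⁺) for 0 < τ ≤ 1 and ω(τ) = (1/p⁺)(1 − ν/r⁻) for τ > 1 (with the conventions 1/p⁺ = 0 if p⁺ = ∞ and ν/r⁺ = 0 if r⁺ = ∞). Then there exists a constant C > 0 such that for every τ > 0 and every f ∈ L^{p(·)}(ℝ^n) ∩ L^ν(ℝ^n), ‖η_{τ,m} * f‖_{L^{r(·)}(ℝ^n)} ≤ C τ^{−nω(τ)} ‖f‖_{L^{p(·)}(ℝ^n)∩L^ν(ℝ^n)}. -/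

import Mathlib

/-!
Put `s = τ⁻ⁿ`, so that `0 ≤ η_{τ,m} ≤ s`, while `∫ η_{τ,m}` does not depend on `τ`. Normalise `f` so
that its modulars for `p(·)` and for `ν` are at most `1`. If `s ≤ K ^ p(y)` for almost every `y`,
then `f` is dominated by `K` where `|f| ≤ K` and by `K s⁻¹ |f| ^ p(·)` elsewhere, so that
`|η * f| ≤ (∫ η + 1) K`. Young's inequality bounds `η * f` in `L^ν`, and the two bounds interpolate:
if `|u| ≤ K` and `K ^ (ι r(x)) ≤ K`, then `(|u| / K ^ (1 - ν ι)) ^ r(x) ≤ |u| ^ ν`.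
The choice `K = s ^ θ` meets both conditions with `θ = 1 / p⁻` and `ι = 1 / r⁺` when `s ≥ 1`, and
with `θ = 1 / p⁺` and `ι = 1 / r⁻` when `s ≤ 1`.
-/

open MeasureTheory Filter Real
open scoped ENNReal

noncomputable section

/-- Euclidean space `ℝⁿ`. -/
abbrev Esp (n : ℕ) := EuclideanSpace ℝ (Fin n)

/-- The variable exponent modular `ρ_{p(·)}(f) = ∫_{ℝⁿ} |f(x)|^{p(x)} dx`. -/
def vMod (n : ℕ) (p : Esp n → ℝ) (f : Esp n → ℝ) : ℝ≥0∞ :=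
  ∫⁻ x, (ENNReal.ofReal |f x|) ^ (p x) ∂volume

/-- The Luxemburg norm `‖f‖_{L^{p(·)}} = inf {λ > 0 : ρ_{p(·)}(f/λ) ≤ 1}`. -/
def luxNorm (n : ℕ) (p : Esp n → ℝ) (f : Esp n → ℝ) : ℝ :=
  sInf {lam : ℝ | 0 < lam ∧ vMod n p (fun x => f x / lam) ≤ 1}

/-- Membership in the variable exponent Lebesgue space `L^{p(·)}(ℝⁿ)`. -/
def MemVLp (n : ℕ) (p : Esp n → ℝ) (f : Esp n → ℝ) : Prop :=
  AEMeasurable f volume ∧ ∃ lam : ℝ, 0 < lam ∧ vMod n p (fun x => f x / lam) ≤ 1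

/-- Global log-Hölder continuity of `1/p` with decay value `l` (representing `l = 1/p_∞`). -/
def IsLogHolder (n : ℕ) (p : Esp n → ℝ) (l : ℝ) : Prop :=
  ∃ c : ℝ, 0 < c ∧
    (∀ x y : Esp n, |1 / p x - 1 / p y| ≤ c / Real.log (Real.exp 1 + 1 / ‖x - y‖)) ∧
    (∀ x : Esp n, |1 / p x - l| ≤ c / Real.log (Real.exp 1 + ‖x‖))

/-- The kernel `η_{t,m}(x) = t^{-n} (1 + |x|/t)^{-m}`. -/
def etaKer (n : ℕ) (t m : ℝ) (x : Esp n) : ℝ :=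
  t ^ (-(n : ℝ)) * (1 + ‖x‖ / t) ^ (-m)

/-- Convolution `(u * v)(x) = ∫ u(x - y) v(y) dy`. -/
def convR (n : ℕ) (u v : Esp n → ℝ) (x : Esp n) : ℝ :=
  ∫ y, u (x - y) * v y ∂volume

section EssentialBounds

variable {α : Type*} [MeasurableSpace α] {μ : Measure α} {f : α → ℝ}

lemma isCoboundedUnder_ge_ae [NeZero μ] (f : α → ℝ) : IsCoboundedUnder (· ≥ ·) (ae μ) f := by
  have hfreq : ∃ N : ℕ, ∃ᶠ x in ae μ, f x ≤ N := by
    by_contra! h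
    have hlt : ∀ᵐ x ∂μ, ∀ N : ℕ, N < f x := by simpa [ae_all_iff] using h
    obtain ⟨x, hx⟩ := hlt.exists
    obtain ⟨N, hN⟩ := exists_nat_gt (f x)
    exact (hx N).not_gt hN
  obtain ⟨N, hN⟩ := hfreq
  exact .of_frequently_le hN

lemma ae_one_le_inv_essInf_mul {c : ℝ} (hc : 0 < c) (hf : ∀ᵐ x ∂μ, c ≤ f x) :
    ∀ᵐ x ∂μ, 1 ≤ (essInf f μ)⁻¹ * f x := by
  rcases eq_zero_or_neZero μ with rfl | _
  · simp
  have hpos : 0 < essInf f μ := hc.trans_le (le_essInf_of_ae_le c hf (isCoboundedUnder_ge_ae f))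
  filter_upwards [ae_essInf_le ⟨c, hf⟩] with x hx
  rwa [inv_mul_eq_div, one_le_div hpos]

lemma essSup_nonneg_of_ae_nonneg [NeZero μ] (hf : ∀ᵐ x ∂μ, 0 ≤ f x) : 0 ≤ essSup f μ := by
  refine Real.sInf_nonneg fun a ha ↦ ?_
  obtain ⟨x, hx0, hxa⟩ := (hf.and (show ∀ᵐ x ∂μ, f x ≤ a from ha)).exists
  exact hx0.trans hxa

lemma ae_inv_essSup_mul_le_one (hf : ∀ᵐ x ∂μ, 0 ≤ f x) :
    ∀ᵐ x ∂μ, (essSup f μ)⁻¹ * f x ≤ 1 := by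
  by_cases hb : IsBoundedUnder (· ≤ ·) (ae μ) f
  · filter_upwards [hf, ae_le_essSup hb] with x hx0 hx
    exact inv_mul_le_one_of_le₀ hx (hx0.trans hx)
  · have hzero : essSup f μ = 0 := Real.limsup_of_not_isBoundedUnder hb
    simp [hzero]

end EssentialBounds

section LConvolution

lemma rpow_lintegral_mul_le {α : Type*} [MeasurableSpace α] {μ : Measure α} {k F : α → ℝ≥0∞}
    (hk : AEMeasurable k μ) (hF : AEMeasurable F μ) {ν : ℝ} (hν : 1 ≤ ν) :
    (∫⁻ y, k y * F y ∂μ) ^ ν ≤ (∫⁻ y, k y ∂μ) ^ (ν - 1) * ∫⁻ y, k y * F y ^ ν ∂μ := by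
  have hν0 : 0 < ν := by linarith
  have hac : μ.withDensity k ≪ μ := withDensity_absolutelyContinuous μ k
  have hnorm := eLpNorm'_le_eLpNorm'_mul_rpow_measure_univ (μ := μ.withDensity k) one_pos hν
    (hF.mono_ac hac).aestronglyMeasurable
  simp only [eLpNorm'_eq_lintegral_enorm, enorm_eq_self, ENNReal.rpow_one, div_one] at hnorm
  rw [lintegral_withDensity_eq_lintegral_mul₀ hk hF,
    lintegral_withDensity_eq_lintegral_mul₀ hk (hF.pow_const ν),
    withDensity_apply _ MeasurableSet.univ, Measure.restrict_univ] at hnorm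
  have hpow := ENNReal.rpow_le_rpow hnorm hν0.le
  rwa [ENNReal.mul_rpow_of_nonneg _ _ hν0.le, ← ENNReal.rpow_mul, ← ENNReal.rpow_mul,
    one_div_mul_cancel hν0.ne', ENNReal.rpow_one, sub_mul, one_mul,
    one_div_mul_cancel hν0.ne', mul_comm (lintegral _ _)] at hpow

variable {G : Type*} [AddGroup G] [MeasurableSpace G] [MeasurableAdd₂ G] [MeasurableNeg G]
  {μ : Measure G} [SFinite μ] [μ.IsAddLeftInvariant]

lemma lintegral_lconvolution {k F : G → ℝ≥0∞} (hk : AEMeasurable k μ) (hF : AEMeasurable F μ) :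
    ∫⁻ x, (k ⋆ₗ[μ] F) x ∂μ = (∫⁻ x, k x ∂μ) * ∫⁻ x, F x ∂μ := by
  simp only [lconvolution_def]
  rw [lintegral_lintegral_swap (by fun_prop), ← lintegral_mul_const'' _ hk]
  refine lintegral_congr fun y ↦ ?_
  have hshift : AEMeasurable (fun x ↦ F (-y + x)) μ :=
    hF.comp_quasiMeasurePreserving (measurePreserving_add_left μ (-y)).quasiMeasurePreserving
  rw [lintegral_const_mul'' _ hshift, lintegral_add_left_eq_self]

lemma lintegral_lconvolution_rpow_le {k F : G → ℝ≥0∞} (hk : AEMeasurable k μ)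
    (hF : AEMeasurable F μ) {ν : ℝ} (hν : 1 ≤ ν) :
    ∫⁻ x, (k ⋆ₗ[μ] F) x ^ ν ∂μ ≤ (∫⁻ x, k x ∂μ) ^ ν * ∫⁻ x, F x ^ ν ∂μ := by
  have hFν : AEMeasurable (fun x ↦ F x ^ ν) μ := hF.pow_const ν
  calc ∫⁻ x, (k ⋆ₗ[μ] F) x ^ ν ∂μ
      ≤ ∫⁻ x, (∫⁻ y, k y ∂μ) ^ (ν - 1) * (k ⋆ₗ[μ] fun z ↦ F z ^ ν) x ∂μ :=
        lintegral_mono fun x ↦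
          rpow_lintegral_mul_le hk (hF.comp_quasiMeasurePreserving (by fun_prop)) hν
    _ = (∫⁻ y, k y ∂μ) ^ (ν - 1) * (∫⁻ y, k y ∂μ) ^ (1 : ℝ) * ∫⁻ x, F x ^ ν ∂μ := by
        rw [lintegral_const_mul'' _ (aemeasurable_lconvolution hk hFν),
          lintegral_lconvolution hk hFν, ENNReal.rpow_one, mul_assoc]
    _ = (∫⁻ y, k y ∂μ) ^ ν * ∫⁻ x, F x ^ ν ∂μ := by
        rw [← ENNReal.rpow_add_of_nonneg _ _ (sub_nonneg.2 hν) zero_le_one, sub_add_cancel]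

lemma mul_le_mul_add_rpow {a t s K : ℝ≥0∞} {p : ℝ} (hp : 1 ≤ p) (hts : t ≤ s)
    (hsK : s ≤ K ^ p) : a * t ≤ K * (t + a ^ p) := by
  have hsplit (b : ℝ≥0∞) : b ^ p = b ^ (p - 1) * b := by
    nth_rw 3 [← ENNReal.rpow_one b]
    rw [← ENNReal.rpow_add_of_nonneg _ _ (sub_nonneg.2 hp) zero_le_one, sub_add_cancel]
  rcases le_total a K with haK | hKa
  · calc a * t ≤ K * t := by gcongr
      _ ≤ K * (t + a ^ p) := by gcongr; exact le_self_add
  · calc a * t ≤ a * (K ^ (p - 1) * K) := by rw [← hsplit]; gcongr; exact hts.trans hsK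
      _ ≤ a * (a ^ (p - 1) * K) := by gcongr
      _ = K * a ^ p := by rw [hsplit]; ring
      _ ≤ K * (t + a ^ p) := by gcongr; exact le_add_self

lemma lconvolution_le_of_le_rpow {G : Type*} [AddCommGroup G] [MeasurableSpace G]
    [MeasurableAdd₂ G] [MeasurableNeg G] {μ : Measure G} [SFinite μ] [μ.IsAddLeftInvariant]
    [μ.IsNegInvariant] {k F : G → ℝ≥0∞} (hk : AEMeasurable k μ) {s K : ℝ≥0∞} (hKtop : K ≠ ∞)
    (hks : ∀ x, k x ≤ s) {p : G → ℝ} (hp : ∀ x, 1 ≤ p x) (hsK : ∀ᵐ y ∂μ, s ≤ K ^ p y) (x : G) :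
    (F ⋆ₗ[μ] k) x ≤ K * ((∫⁻ y, k y ∂μ) + ∫⁻ y, F y ^ p y ∂μ) := by
  have hshift : AEMeasurable (fun y ↦ k (x - y)) μ :=
    hk.comp_quasiMeasurePreserving (quasiMeasurePreserving_sub_left μ x)
  calc (F ⋆ₗ[μ] k) x
      = ∫⁻ y, F y * k (x - y) ∂μ := by simp only [lconvolution_def, neg_add_eq_sub]
    _ ≤ ∫⁻ y, K * (k (x - y) + F y ^ p y) ∂μ := lintegral_mono_ae <| by
        filter_upwards [hsK] with y hy
        exact mul_le_mul_add_rpow (hp y) (hks _) hy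
    _ = K * ((∫⁻ y, k y ∂μ) + ∫⁻ y, F y ^ p y ∂μ) := by
        rw [lintegral_const_mul' _ _ hKtop, lintegral_add_left' hshift,
          lintegral_sub_left_eq_self k x]

end LConvolution

section Modular

variable {n : ℕ} {p : Esp n → ℝ} {f : Esp n → ℝ}

lemma vMod_eq_lintegral_enorm (p f : Esp n → ℝ) : vMod n p f = ∫⁻ x, ‖f x‖ₑ ^ p x := by
  simp only [vMod, Real.enorm_eq_ofReal_abs]

lemma vMod_const_div (f : Esp n → ℝ) {c ν : ℝ} (hc : 0 < c) (hν : 0 ≤ ν) :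
    vMod n (fun _ ↦ ν) (fun x ↦ f x / c) = (ENNReal.ofReal c ^ ν)⁻¹ * vMod n (fun _ ↦ ν) f := by
  have hcν : (ENNReal.ofReal c ^ ν)⁻¹ ≠ ∞ :=
    ENNReal.inv_ne_top.2 (ENNReal.rpow_pos (ENNReal.ofReal_pos.2 hc) ENNReal.ofReal_ne_top).ne'
  rw [vMod, vMod, ← lintegral_const_mul' _ _ hcν]
  refine lintegral_congr fun x ↦ ?_
  rw [abs_div, abs_of_pos hc, ENNReal.ofReal_div_of_pos hc, ENNReal.div_rpow_of_nonneg _ _ hν,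
    ENNReal.div_eq_inv_mul]

lemma div_rpow_rpow_le_rpow {u K ν ι r : ℝ} (hu : 0 ≤ u) (hK : 0 < K) (huK : u ≤ K) (hν : 0 < ν)
    (hνr : ν ≤ r) (hKr : K ^ (ι * r) ≤ K) : (u / K ^ (1 - ν * ι)) ^ r ≤ u ^ ν := by
  have hKν : K ^ (r - ν) ≤ (K ^ (1 - ν * ι)) ^ r := by
    rw [← Real.rpow_mul hK.le, show (1 - ν * ι) * r = r - ι * r * ν by ring, Real.rpow_sub hK,
      Real.rpow_sub hK, Real.rpow_mul hK.le (ι * r)]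
    gcongr
  rw [Real.div_rpow hu (by positivity), div_le_iff₀ (by positivity)]
  calc u ^ r = u ^ ν * u ^ (r - ν) := by
        rw [← Real.rpow_add_of_nonneg hu hν.le (sub_nonneg.2 hνr), add_sub_cancel]
    _ ≤ u ^ ν * K ^ (r - ν) := by gcongr
    _ ≤ u ^ ν * (K ^ (1 - ν * ι)) ^ r := by gcongr

lemma vMod_div_le_vMod_const {r g : Esp n → ℝ} {K ν ι : ℝ} (hK : 0 < K) (hgK : ∀ x, |g x| ≤ K)
    (hν : 0 < ν) (hνr : ∀ᵐ x, ν ≤ r x) (hKr : ∀ᵐ x, K ^ (ι * r x) ≤ K) :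
    vMod n r (fun x ↦ g x / K ^ (1 - ν * ι)) ≤ vMod n (fun _ ↦ ν) g := by
  refine lintegral_mono_ae ?_
  filter_upwards [hνr, hKr] with x hνx hKx
  rw [ENNReal.ofReal_rpow_of_nonneg (abs_nonneg _) (hν.le.trans hνx),
    ENNReal.ofReal_rpow_of_nonneg (abs_nonneg _) hν.le, abs_div,
    abs_of_pos (Real.rpow_pos_of_pos hK _)]
  exact ENNReal.ofReal_le_ofReal (div_rpow_rpow_le_rpow (abs_nonneg _) hK (hgK x) hν hνx hKx)

lemma vMod_div_le_one_of_luxNorm_lt (hp : ∀ x, 0 ≤ p x) (hf : MemVLp n p f) {lam : ℝ}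
    (hlam : luxNorm n p f < lam) : vMod n p (fun x ↦ f x / lam) ≤ 1 := by
  obtain ⟨l, ⟨hl0, hl⟩, hlt⟩ := exists_lt_of_csInf_lt hf.2 hlam
  refine (lintegral_mono fun x ↦ ?_).trans hl
  rw [abs_div, abs_div, abs_of_pos hl0, abs_of_pos (hl0.trans hlt)]
  gcongr
  exact hp x

lemma luxNorm_nonneg (p f : Esp n → ℝ) : 0 ≤ luxNorm n p f :=
  Real.sInf_nonneg fun _ h ↦ h.1.le

lemma luxNorm_le_mul_max_of_vMod_le_one {q r g : Esp n → ℝ} {c : ℝ} (hp : ∀ x, 0 ≤ p x)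
    (hq : ∀ x, 0 ≤ q x) (hfp : MemVLp n p f) (hfq : MemVLp n q f) (hc : 0 < c)
    (h : ∀ lam : ℝ, vMod n p (fun x ↦ f x / lam) ≤ 1 →
      vMod n q (fun x ↦ f x / lam) ≤ 1 → vMod n r (fun x ↦ g x / lam / c) ≤ 1) :
    luxNorm n r g ≤ c * max (luxNorm n p f) (luxNorm n q f) := by
  rw [← div_le_iff₀' hc]
  refine le_of_forall_gt_imp_ge_of_dense fun lam hlam ↦ ?_
  obtain ⟨hplam, hqlam⟩ := max_lt_iff.1 hlam
  have hlam0 : 0 < lam := (luxNorm_nonneg p f).trans_lt hplam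
  have hg := h lam (vMod_div_le_one_of_luxNorm_lt hp hfp hplam)
    (vMod_div_le_one_of_luxNorm_lt hq hfq hqlam)
  simp only [div_div] at hg
  rw [div_le_iff₀ hc]
  exact csInf_le ⟨0, fun _ ha ↦ ha.1.le⟩ ⟨by positivity, hg⟩

end Modular

section Convolution

variable {n : ℕ} {k f : Esp n → ℝ}

lemma convR_div_const (k f : Esp n → ℝ) (c : ℝ) (x : Esp n) :
    convR n k (fun y ↦ f y / c) x = convR n k f x / c := by
  simp only [convR, ← mul_div_assoc, integral_div]

lemma enorm_convR_le (k f : Esp n → ℝ) (x : Esp n) :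
    ‖convR n k f x‖ₑ ≤ ((‖f ·‖ₑ) ⋆ₗ (‖k ·‖ₑ)) x := by
  refine (enorm_integral_le_lintegral_enorm _).trans_eq (lintegral_congr fun y ↦ ?_)
  rw [enorm_mul, mul_comm, sub_eq_neg_add]

lemma vMod_const_convR_le (hk : Integrable k) (hf : AEMeasurable f) {ν : ℝ} (hν : 1 ≤ ν) :
    vMod n (fun _ ↦ ν) (convR n k f) ≤
      ENNReal.ofReal (∫ x, ‖k x‖) ^ ν * vMod n (fun _ ↦ ν) f := by
  simp only [vMod_eq_lintegral_enorm, ofReal_integral_norm_eq_lintegral_enorm hk]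
  refine le_trans (lintegral_mono fun x ↦ ?_)
    (lintegral_lconvolution_rpow_le hk.aestronglyMeasurable.enorm hf.enorm hν)
  rw [lconvolution_comm]
  gcongr
  exact enorm_convR_le k f x

lemma abs_convR_le (hk : Integrable k) {s K : ℝ} (hks : ∀ x, |k x| ≤ s) (hK : 0 < K)
    {p : Esp n → ℝ} (hp : ∀ x, 1 ≤ p x) (hsK : ∀ᵐ y, s ≤ K ^ p y) (hf : vMod n p f ≤ 1)
    (x : Esp n) : |convR n k f x| ≤ (1 + ∫ y, ‖k y‖) * K := by
  have hsK' : ∀ᵐ y, ENNReal.ofReal s ≤ ENNReal.ofReal K ^ p y := by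
    filter_upwards [hsK] with y hy
    rw [ENNReal.ofReal_rpow_of_pos hK]
    exact ENNReal.ofReal_le_ofReal hy
  have hks' : ∀ x, ‖k x‖ₑ ≤ ENNReal.ofReal s := fun x ↦ by
    rw [Real.enorm_eq_ofReal_abs]
    exact ENNReal.ofReal_le_ofReal (hks x)
  have hA : 0 ≤ ∫ y, ‖k y‖ := by positivity
  rw [← ENNReal.ofReal_le_ofReal_iff (by positivity), ← Real.enorm_eq_ofReal_abs]
  calc ‖convR n k f x‖ₑ
      ≤ ENNReal.ofReal K * ((∫⁻ y, ‖k y‖ₑ) + ∫⁻ y, ‖f y‖ₑ ^ p y) :=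
        (enorm_convR_le k f x).trans (lconvolution_le_of_le_rpow hk.aestronglyMeasurable.enorm
          ENNReal.ofReal_ne_top hks' hp hsK' x)
    _ ≤ ENNReal.ofReal K * (1 + ENNReal.ofReal (∫ y, ‖k y‖)) := by
        rw [← vMod_eq_lintegral_enorm, ofReal_integral_norm_eq_lintegral_enorm hk, add_comm]
        gcongr
    _ = ENNReal.ofReal ((1 + ∫ y, ‖k y‖) * K) := by
        rw [← ENNReal.ofReal_one, ← ENNReal.ofReal_add zero_le_one hA, ← ENNReal.ofReal_mul hK.le,
          mul_comm]

lemma luxNorm_convR_le (hk : Integrable k) {s K : ℝ} (hks : ∀ x, |k x| ≤ s) (hK : 0 < K)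
    {p r : Esp n → ℝ} (hp : ∀ x, 1 ≤ p x) (hsK : ∀ᵐ y, s ≤ K ^ p y) {ν ι : ℝ} (hν : 1 ≤ ν)
    (hνr : ∀ᵐ x, ν ≤ r x) (hKr : ∀ᵐ x, K ^ (ι * r x) ≤ K)
    (hfp : MemVLp n p f) (hfν : MemVLp n (fun _ ↦ ν) f) :
    luxNorm n r (convR n k f) ≤ (1 + ∫ x, ‖k x‖) * K ^ (1 - ν * ι) *
      max (luxNorm n p f) (luxNorm n (fun _ ↦ ν) f) := by
  have hν0 : 0 < ν := one_pos.trans_le hν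
  set C := 1 + ∫ x, ‖k x‖ with hC
  have hC0 : 0 < C := add_pos_of_pos_of_nonneg one_pos (by positivity)
  refine luxNorm_le_mul_max_of_vMod_le_one (fun x ↦ zero_le_one.trans (hp x)) (fun _ ↦ hν0.le)
    hfp hfν (by positivity) fun lam hplam hνlam ↦ ?_
  simp only [← convR_div_const k f lam, ← div_div _ C]
  have hbound (x : Esp n) : |convR n k (fun y ↦ f y / lam) x / C| ≤ K := by
    rw [abs_div, abs_of_pos hC0, div_le_iff₀' hC0]
    exact abs_convR_le hk hks hK hp hsK hplam x
  refine (vMod_div_le_vMod_const hK hbound hν0 hνr hKr).trans ?_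
  calc vMod n (fun _ ↦ ν) (fun x ↦ convR n k (fun y ↦ f y / lam) x / C)
      ≤ (ENNReal.ofReal C ^ ν)⁻¹ * (ENNReal.ofReal (∫ x, ‖k x‖) ^ ν * 1) := by
        rw [vMod_const_div _ hC0 hν0.le]
        gcongr
        exact (vMod_const_convR_le hk (hfν.1.div_const lam) hν).trans (by gcongr)
    _ ≤ (ENNReal.ofReal C ^ ν)⁻¹ * ENNReal.ofReal C ^ ν := by
        rw [mul_one, hC]
        gcongr
        exact le_add_of_nonneg_left zero_le_one
    _ ≤ 1 := ENNReal.inv_mul_le_one _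

end Convolution

section EtaKernel

variable {n : ℕ} {t m : ℝ}

lemma etaKer_nonneg (ht : 0 ≤ t) (x : Esp n) : 0 ≤ etaKer n t m x := by
  unfold etaKer
  positivity

lemma abs_etaKer_le (hm : 0 ≤ m) (ht : 0 ≤ t) (x : Esp n) :
    |etaKer n t m x| ≤ t ^ (-(n : ℝ)) := by
  rw [abs_of_nonneg (etaKer_nonneg ht x)]
  refine mul_le_of_le_one_right (by positivity)
    (Real.rpow_le_one_of_one_le_of_nonpos ?_ (neg_nonpos.2 hm))
  exact le_add_of_nonneg_right (by positivity)

lemma etaKer_eq_smul (ht : 0 < t) (x : Esp n) :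
    etaKer n t m x = t ^ (-(n : ℝ)) * (1 + ‖t⁻¹ • x‖) ^ (-m) := by
  rw [etaKer, norm_smul, norm_inv, Real.norm_of_nonneg ht.le, div_eq_inv_mul]

lemma integrable_etaKer (hm : (n : ℝ) < m) (ht : 0 < t) : Integrable (etaKer n t m) := by
  have hone : Integrable fun x : Esp n ↦ (1 + ‖x‖) ^ (-m) :=
    integrable_one_add_norm (by simpa using hm)
  rw [funext (etaKer_eq_smul ht)]
  exact (hone.comp_smul (inv_ne_zero ht.ne')).const_mul _

lemma integral_norm_etaKer (m : ℝ) (ht : 0 < t) :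
    ∫ x, ‖etaKer n t m x‖ = ∫ x : Esp n, (1 + ‖x‖) ^ (-m) := by
  simp only [Real.norm_of_nonneg (etaKer_nonneg ht.le _)]
  simp only [etaKer_eq_smul ht]
  rw [integral_const_mul,
    Measure.integral_comp_inv_smul_of_nonneg volume (fun x : Esp n ↦ (1 + ‖x‖) ^ (-m)) ht.le,
    finrank_euclideanSpace_fin, smul_eq_mul, Real.rpow_neg ht.le, Real.rpow_natCast,
    inv_mul_cancel_left₀ (by positivity)]

lemma luxNorm_convR_etaKer_le (hm : (n : ℝ) < m) (ht : 0 < t) {p r f : Esp n → ℝ}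
    (hp : ∀ x, 1 ≤ p x) {ν θ ι : ℝ} (hν : 1 ≤ ν) (hνr : ∀ᵐ x, ν ≤ r x)
    (htp : ∀ᵐ y, t ^ (-(n : ℝ)) ≤ t ^ (-(n : ℝ) * θ * p y))
    (htr : ∀ᵐ x, t ^ (-(n : ℝ) * θ * (ι * r x)) ≤ t ^ (-(n : ℝ) * θ))
    (hfp : MemVLp n p f) (hfν : MemVLp n (fun _ ↦ ν) f) :
    luxNorm n r (convR n (etaKer n t m) f) ≤
      (1 + ∫ x : Esp n, (1 + ‖x‖) ^ (-m)) * t ^ (-(n : ℝ) * (θ * (1 - ν * ι))) *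
        max (luxNorm n p f) (luxNorm n (fun _ ↦ ν) f) := by
  rw [← integral_norm_etaKer m ht, ← mul_assoc (-(n : ℝ)), Real.rpow_mul ht.le]
  refine luxNorm_convR_le (integrable_etaKer hm ht)
    (abs_etaKer_le (n.cast_nonneg.trans hm.le) ht.le) (by positivity) hp ?_ hν hνr ?_ hfp hfν
  · simpa only [Real.rpow_mul ht.le] using htp
  · simpa only [Real.rpow_mul ht.le] using htr

lemma luxNorm_convR_etaKer_le_of_le_one (hm : (n : ℝ) < m) (ht : 0 < t) (ht1 : t ≤ 1)
    {p r f : Esp n → ℝ} (hp : ∀ x, 1 ≤ p x) {ν θ ι : ℝ} (hν : 1 ≤ ν) (hνr : ∀ᵐ x, ν ≤ r x)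
    (hθp : ∀ᵐ y, 1 ≤ θ * p y) (hιr : ∀ᵐ x, ι * r x ≤ 1)
    (hfp : MemVLp n p f) (hfν : MemVLp n (fun _ ↦ ν) f) :
    luxNorm n r (convR n (etaKer n t m) f) ≤
      (1 + ∫ x : Esp n, (1 + ‖x‖) ^ (-m)) * t ^ (-(n : ℝ) * (θ * (1 - ν * ι))) *
        max (luxNorm n p f) (luxNorm n (fun _ ↦ ν) f) := by
  obtain ⟨y, hy⟩ := hθp.exists
  have hθ : 0 < θ := pos_of_mul_pos_left (one_pos.trans_le hy) (zero_le_one.trans (hp y))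
  have hnθ : 0 ≤ n * θ := by positivity
  refine luxNorm_convR_etaKer_le hm ht hp hν hνr ?_ ?_ hfp hfν
  · filter_upwards [hθp] with y hy
    refine Real.rpow_le_rpow_of_exponent_ge ht ht1 ?_
    linarith [le_mul_of_one_le_right n.cast_nonneg hy]
  · filter_upwards [hιr] with x hx
    refine Real.rpow_le_rpow_of_exponent_ge ht ht1 ?_
    linarith [mul_le_of_le_one_right hnθ hx]

lemma luxNorm_convR_etaKer_le_of_one_le (hm : (n : ℝ) < m) (ht1 : 1 ≤ t)
    {p r f : Esp n → ℝ} (hp : ∀ x, 1 ≤ p x) {ν θ ι : ℝ} (hν : 1 ≤ ν) (hνr : ∀ᵐ x, ν ≤ r x)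
    (hθ : 0 ≤ θ) (hθp : ∀ᵐ y, θ * p y ≤ 1) (hιr : ∀ᵐ x, 1 ≤ ι * r x)
    (hfp : MemVLp n p f) (hfν : MemVLp n (fun _ ↦ ν) f) :
    luxNorm n r (convR n (etaKer n t m) f) ≤
      (1 + ∫ x : Esp n, (1 + ‖x‖) ^ (-m)) * t ^ (-(n : ℝ) * (θ * (1 - ν * ι))) *
        max (luxNorm n p f) (luxNorm n (fun _ ↦ ν) f) := by
  have hnθ : 0 ≤ n * θ := by positivity
  refine luxNorm_convR_etaKer_le hm (one_pos.trans_le ht1) hp hν hνr ?_ ?_ hfp hfν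
  · filter_upwards [hθp] with y hy
    refine Real.rpow_le_rpow_of_exponent_le ht1 ?_
    linarith [mul_le_of_le_one_right n.cast_nonneg hy]
  · filter_upwards [hιr] with x hx
    refine Real.rpow_le_rpow_of_exponent_le ht1 ?_
    linarith [le_mul_of_one_le_right hnθ hx]

end EtaKernel

/-- Theorem 3.9(3) of the paper: `‖η_{τ,m} * f‖_{L^{r(·)}} ≤ C τ^{-nω(τ)} ‖f‖_{L^{p(·)} ∩ L^ν}`
for a constant `1 ≤ ν ≤ r⁻`. The conventions `1/p⁺ = 0` if `p⁺ = ∞` and `ν/r⁺ = 0` if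
`r⁺ = ∞` match Lean's conventions (`essSup = 0` for essentially unbounded real-valued
exponents `≥ 1`, and division by `0` is `0`). -/
theorem statement7 (n : ℕ) (hn : 1 ≤ n) (m : ℝ) (hm : (n : ℝ) < m)
    (r pexp : Esp n → ℝ) (hrmeas : Measurable r) (hpmeas : Measurable pexp)
    (hr1 : ∀ x, 1 ≤ r x) (hp1 : ∀ x, 1 ≤ pexp x)
    (rm rp pm pp : ℝ)
    (hrm : rm = essInf r volume) (hrp : rp = essSup r volume)
    (hpm : pm = essInf pexp volume) (hpp : pp = essSup pexp volume)
    (ν : ℝ) (hν1 : 1 ≤ ν) (hνrm : ν ≤ rm) :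
    ∃ C : ℝ, 0 < C ∧ ∀ τ : ℝ, 0 < τ → ∀ f : Esp n → ℝ,
      MemVLp n pexp f → MemVLp n (fun _ => ν) f →
      luxNorm n r (convR n (etaKer n τ m) f) ≤
        C * τ ^ (-(n : ℝ) *
          (if τ ≤ 1 then (1 / pm) * (1 - ν / rp) else (1 / pp) * (1 - ν / rm))) *
        max (luxNorm n pexp f) (luxNorm n (fun _ => ν) f) := by
  have hp0 : ∀ᵐ x, 0 ≤ pexp x := .of_forall fun x ↦ zero_le_one.trans (hp1 x)
  have hr0 : ∀ᵐ x, 0 ≤ r x := .of_forall fun x ↦ zero_le_one.trans (hr1 x)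
  have hνr : ∀ᵐ x, ν ≤ r x := by
    filter_upwards [ae_essInf_le (isBoundedUnder_of ⟨1, hr1⟩)] with x hx
    exact hνrm.trans (hrm.trans_le hx)
  refine ⟨1 + ∫ x : Esp n, (1 + ‖x‖) ^ (-m), by positivity, fun τ hτ f hfp hfν ↦ ?_⟩
  simp only [div_eq_mul_inv, one_mul]
  subst hrm hrp hpm hpp
  split_ifs with hτ1
  · exact luxNorm_convR_etaKer_le_of_le_one hm hτ hτ1 hp1 hν1 hνr
      (ae_one_le_inv_essInf_mul one_pos (.of_forall hp1))
      (ae_inv_essSup_mul_le_one hr0) hfp hfν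
  · exact luxNorm_convR_etaKer_le_of_one_le hm (not_le.1 hτ1).le hp1 hν1 hνr
      (inv_nonneg.2 (essSup_nonneg_of_ae_nonneg hp0))
      (ae_inv_essSup_mul_le_one hp0)
      (ae_one_le_inv_essInf_mul one_pos (.of_forall hr1)) hfp hfν
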